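/- arXiv:1404.0842 — 4 statements merged into one kernel-verified Lean document; each statement's English description precedes it below -/
import Mathlib

section
/- Let (A¹, B¹) be an n₁×m₁ bimatrix game, (A², B²) an n₂×m₂ bimatrix game, and let (A, B) be their product game. If (x¹, y¹) is a Nash equilibrium of (A¹, B¹) and (x², y²) is a Nash equilibrium of (A², B²), then (x, y) defined by x (i₁,i₂) = x¹ i₁ * x² i₂ and y (j₁,j₂) = y¹ j₁ * y² j₂ is a Nash equilibrium of (A, B). -/
open Finset

/-- A mixed strategy: nonnegative and sums to 1. -/
def IsMixed {n : Type*} [Fintype n] (x : n → ℝ) : Prop :=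
  (∀ i, 0 ≤ x i) ∧ ∑ i, x i = 1

/-- Expected payoff for the matrix `M` under strategies `x`, `y`. -/
def payoff {n m : Type*} [Fintype n] [Fintype m] (M : Matrix n m ℝ)
    (x : n → ℝ) (y : m → ℝ) : ℝ :=
  ∑ i, ∑ j, x i * M i j * y j

/-- Nash equilibrium of the bimatrix game `(A, B)`. -/
def IsNash {n m : Type*} [Fintype n] [Fintype m] (A B : Matrix n m ℝ)
    (x : n → ℝ) (y : m → ℝ) : Prop :=
  IsMixed x ∧ IsMixed y ∧
  (∀ x', IsMixed x' → payoff A x' y ≤ payoff A x y) ∧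
  (∀ y', IsMixed y' → payoff B x y' ≤ payoff B x y)

/-- The product game of two bimatrix games (one payoff matrix). -/
def prodGame {n₁ m₁ n₂ m₂ : Type*} (M₁ : Matrix n₁ m₁ ℝ) (M₂ : Matrix n₂ m₂ ℝ) :
    Matrix (n₁ × n₂) (m₁ × m₂) ℝ :=
  fun p q => M₁ p.1 q.1 + M₂ p.2 q.2

/-- One payoff matrix of the sum game via constant `c` on the off-diagonal blocks. -/
def sumGame {n₁ m₁ n₂ m₂ : Type*} (M₁ : Matrix n₁ m₁ ℝ) (M₂ : Matrix n₂ m₂ ℝ)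
    (c : ℝ) : Matrix (n₁ ⊕ n₂) (m₁ ⊕ m₂) ℝ :=
  fun i j => match i, j with
    | Sum.inl i, Sum.inl j => M₁ i j
    | Sum.inr i, Sum.inr j => M₂ i j
    | _, _ => c

/-!
The payoff of a product game splits as a sum of payoffs in the two factors, taken at the marginals
of the two strategies: pulling a payoff matrix back along maps of its index types amounts to
pushing the strategies forward along these maps. The marginals of a deviation are themselves
deviations in the two factors, so none is profitable as soon as the marginals of the candidate
profile are equilibria; the marginals of a product strategy are its factors.
-/

section Pushforward

variable {ι κ R : Type*} [Fintype ι] [Fintype κ]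

lemma funOnFinite_map_dotProduct [NonUnitalNonAssocSemiring R] (f : ι → κ) (x : ι → R) (v : κ → R) :
    FunOnFinite.map f x ⬝ᵥ v = x ⬝ᵥ (v ∘ f) := by
  classical
  calc FunOnFinite.map f x ⬝ᵥ v
      = ∑ k, ∑ i with f i = k, x i * v k := by
        simp only [dotProduct, FunOnFinite.map_apply_apply, sum_mul]
    _ = ∑ k, ∑ i with f i = k, x i * v (f i) :=
        sum_congr rfl fun k _ => sum_congr rfl fun i hi => by rw [(mem_filter.mp hi).2]
    _ = x ⬝ᵥ (v ∘ f) := sum_fiberwise univ f fun i => x i * v (f i)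

lemma submatrix_mulVec_eq_mulVec_map [NonUnitalNonAssocCommSemiring R] {n n' : Type*}
    (M : Matrix n κ R) (e : n' → n) (f : ι → κ) (x : ι → R) :
    (M.submatrix e f).mulVec x = M.mulVec (FunOnFinite.map f x) ∘ e := by
  ext i
  calc M.submatrix e f i ⬝ᵥ x
      = x ⬝ᵥ (M (e i) ∘ f) := dotProduct_comm _ _
    _ = FunOnFinite.map f x ⬝ᵥ M (e i) := (funOnFinite_map_dotProduct f x _).symm
    _ = M (e i) ⬝ᵥ FunOnFinite.map f x := dotProduct_comm _ _

end Pushforward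

section ProductMarginals

variable {ι κ R : Type*} [NonAssocSemiring R]

lemma funOnFinite_map_fst_mul [Finite ι] [Fintype κ] (x : ι → R) {y : κ → R} (hy : ∑ j, y j = 1) :
    FunOnFinite.map Prod.fst (fun p : ι × κ => x p.1 * y p.2) = x := by
  classical
  cases nonempty_fintype ι
  ext i
  simp [FunOnFinite.map_apply_apply, sum_filter, Fintype.sum_prod_type_right, ← mul_sum, hy]

lemma funOnFinite_map_snd_mul [Fintype ι] [Finite κ] {x : ι → R} (hx : ∑ i, x i = 1) (y : κ → R) :
    FunOnFinite.map Prod.snd (fun p : ι × κ => x p.1 * y p.2) = y := by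
  classical
  cases nonempty_fintype κ
  ext j
  simp [FunOnFinite.map_apply_apply, sum_filter, Fintype.sum_prod_type, ← sum_mul, hx]

end ProductMarginals

section MixedStrategy

variable {ι κ : Type*} [Fintype ι] [Fintype κ]

lemma IsMixed.map {x : ι → ℝ} (hx : IsMixed x) (f : ι → κ) : IsMixed (FunOnFinite.map f x) :=
  stdSimplex.image_linearMap f ⟨x, hx, rfl⟩

lemma IsMixed.prod {x : ι → ℝ} {y : κ → ℝ} (hx : IsMixed x) (hy : IsMixed y) :
    IsMixed fun p : ι × κ => x p.1 * y p.2 :=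
  ⟨fun p => mul_nonneg (hx.1 p.1) (hy.1 p.2), by
    rw [Fintype.sum_prod_type, ← sum_mul_sum, hx.2, hy.2, one_mul]⟩

end MixedStrategy

section Payoff

variable {n m n₁ m₁ n₂ m₂ : Type*} [Fintype n] [Fintype m]
  [Fintype n₁] [Fintype m₁] [Fintype n₂] [Fintype m₂]

lemma payoff_eq_dotProduct_mulVec (M : Matrix n m ℝ) (x : n → ℝ) (y : m → ℝ) :
    payoff M x y = x ⬝ᵥ M.mulVec y := by
  simp only [payoff, dotProduct, Matrix.mulVec, mul_sum, mul_assoc]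

lemma payoff_add (M N : Matrix n m ℝ) (x : n → ℝ) (y : m → ℝ) :
    payoff (M + N) x y = payoff M x y + payoff N x y := by
  simp only [payoff_eq_dotProduct_mulVec, Matrix.add_mulVec, dotProduct_add]

lemma payoff_submatrix (M : Matrix n m ℝ) (f : n₁ → n) (g : m₁ → m) (x : n₁ → ℝ) (y : m₁ → ℝ) :
    payoff (M.submatrix f g) x y = payoff M (FunOnFinite.map f x) (FunOnFinite.map g y) := by
  rw [payoff_eq_dotProduct_mulVec, payoff_eq_dotProduct_mulVec, funOnFinite_map_dotProduct,
    submatrix_mulVec_eq_mulVec_map]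

lemma payoff_prodGame (M₁ : Matrix n₁ m₁ ℝ) (M₂ : Matrix n₂ m₂ ℝ)
    (x : n₁ × n₂ → ℝ) (y : m₁ × m₂ → ℝ) :
    payoff (prodGame M₁ M₂) x y =
      payoff M₁ (FunOnFinite.map Prod.fst x) (FunOnFinite.map Prod.fst y) +
        payoff M₂ (FunOnFinite.map Prod.snd x) (FunOnFinite.map Prod.snd y) := by
  have prodGame_eq_add : prodGame M₁ M₂ =
      M₁.submatrix Prod.fst Prod.fst + M₂.submatrix Prod.snd Prod.snd := rfl
  rw [prodGame_eq_add, payoff_add, payoff_submatrix, payoff_submatrix]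

end Payoff

section Nash

variable {n₁ m₁ n₂ m₂ : Type*} [Fintype n₁] [Fintype m₁] [Fintype n₂] [Fintype m₂]
  {A₁ B₁ : Matrix n₁ m₁ ℝ} {A₂ B₂ : Matrix n₂ m₂ ℝ}

lemma isNash_prodGame_of_marginals {x : n₁ × n₂ → ℝ} {y : m₁ × m₂ → ℝ}
    (hx : IsMixed x) (hy : IsMixed y)
    (h₁ : IsNash A₁ B₁ (FunOnFinite.map Prod.fst x) (FunOnFinite.map Prod.fst y))
    (h₂ : IsNash A₂ B₂ (FunOnFinite.map Prod.snd x) (FunOnFinite.map Prod.snd y)) :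
    IsNash (prodGame A₁ A₂) (prodGame B₁ B₂) x y := by
  obtain ⟨-, -, row₁, col₁⟩ := h₁
  obtain ⟨-, -, row₂, col₂⟩ := h₂
  refine ⟨hx, hy, fun x' hx' => ?_, fun y' hy' => ?_⟩
  · rw [payoff_prodGame, payoff_prodGame]
    exact add_le_add (row₁ _ (hx'.map Prod.fst)) (row₂ _ (hx'.map Prod.snd))
  · rw [payoff_prodGame, payoff_prodGame]
    exact add_le_add (col₁ _ (hy'.map Prod.fst)) (col₂ _ (hy'.map Prod.snd))

theorem product_of_nash_is_nash_general {x₁ : n₁ → ℝ} {y₁ : m₁ → ℝ} {x₂ : n₂ → ℝ} {y₂ : m₂ → ℝ}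
    (h₁ : IsNash A₁ B₁ x₁ y₁) (h₂ : IsNash A₂ B₂ x₂ y₂) :
    IsNash (prodGame A₁ A₂) (prodGame B₁ B₂)
      (fun p : n₁ × n₂ => x₁ p.1 * x₂ p.2) (fun q : m₁ × m₂ => y₁ q.1 * y₂ q.2) := by
  have ⟨hx₁, hy₁, _⟩ := h₁
  have ⟨hx₂, hy₂, _⟩ := h₂
  refine isNash_prodGame_of_marginals (hx₁.prod hx₂) (hy₁.prod hy₂) ?_ ?_
  · rwa [funOnFinite_map_fst_mul x₁ hx₂.2, funOnFinite_map_fst_mul y₁ hy₂.2]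
  · rwa [funOnFinite_map_snd_mul hx₁.2, funOnFinite_map_snd_mul hy₁.2]

end Nash

theorem product_of_nash_is_nash {n₁ m₁ n₂ m₂ : ℕ}
    (A₁ B₁ : Matrix (Fin n₁) (Fin m₁) ℝ) (A₂ B₂ : Matrix (Fin n₂) (Fin m₂) ℝ)
    (x₁ : Fin n₁ → ℝ) (y₁ : Fin m₁ → ℝ) (x₂ : Fin n₂ → ℝ) (y₂ : Fin m₂ → ℝ)
    (h₁ : IsNash A₁ B₁ x₁ y₁) (h₂ : IsNash A₂ B₂ x₂ y₂) :
    IsNash (prodGame A₁ A₂) (prodGame B₁ B₂)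
      (fun p : Fin n₁ × Fin n₂ => x₁ p.1 * x₂ p.2)
      (fun q : Fin m₁ × Fin m₂ => y₁ q.1 * y₂ q.2) := by
  exact product_of_nash_is_nash_general h₁ h₂
end

section
/- Let (A¹, B¹) be an n₁×m₁ bimatrix game, (A², B²) an n₂×m₂ bimatrix game (with n₁, m₁, n₂, m₂ ≥ 1), K a real constant with K > |A¹ i j|, |B¹ i j|, |A² i j|, |B² i j| for all entries, and let (A, B) be their sum game via K. If (x, y) is a Nash equilibrium of (A, B), then 0 < ∑ i : Fin n₁, x (Sum.inl i) < 1 and 0 < ∑ j : Fin m₁, y (Sum.inl j) < 1. -/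
open Finset

/-!
If one strategy strictly beats another against every pure strategy the opponent actually plays,
then the beaten one has probability zero in equilibrium. In the sum game the row player therefore
flees the block to which the column player is confined, while the column player follows the row
player into his block. A vanishing block mass propagates along these two reactions until both of
the row player's blocks are empty, which no mixed strategy allows.
-/

section Dominance

variable {n m : Type*} [Fintype n] [Fintype m]

theorem dotProduct_lt_dotProduct_of_le_of_lt_on_support {R : Type*} [Semiring R] [PartialOrder R]
    [IsStrictOrderedRing R] {f g w : n → R} (hw : ∀ i, 0 ≤ w i)
    (hle : ∀ i, w i ≠ 0 → f i ≤ g i) (hlt : ∃ i, w i ≠ 0 ∧ f i < g i) :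
    f ⬝ᵥ w < g ⬝ᵥ w := by
  refine Finset.sum_lt_sum (fun i _ => ?_) ?_
  · rcases eq_or_ne (w i) 0 with hi | hi
    · simp only [hi, mul_zero, le_refl]
    · exact mul_le_mul_of_nonneg_right (hle i hi) (hw i)
  · obtain ⟨i, hi, hfg⟩ := hlt
    exact ⟨i, mem_univ i, mul_lt_mul_of_pos_right hfg ((hw i).lt_of_ne' hi)⟩

theorem IsMixed.exists_ne_zero {x : n → ℝ} (hx : IsMixed x) : ∃ i, x i ≠ 0 := by
  by_contra! hzero
  simpa only [hzero, sum_const_zero, zero_ne_one] using hx.2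

theorem isMixed_single [DecidableEq n] (i : n) : IsMixed (Pi.single i (1 : ℝ)) :=
  ⟨(Pi.single_nonneg.2 zero_le_one : (0 : n → ℝ) ≤ Pi.single i 1), Fintype.sum_pi_single' i 1⟩

theorem payoff_eq_mulVec_dotProduct (M : Matrix n m ℝ) (x : n → ℝ) (y : m → ℝ) :
    payoff M x y = M.mulVec y ⬝ᵥ x := by
  rw [dotProduct_comm]
  simp only [payoff, dotProduct, Matrix.mulVec, mul_sum, mul_assoc]

theorem payoff_transpose (M : Matrix n m ℝ) (x : n → ℝ) (y : m → ℝ) :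
    payoff M.transpose y x = payoff M x y := by
  rw [payoff_eq_mulVec_dotProduct, payoff_eq_mulVec_dotProduct, Matrix.mulVec_transpose,
    ← Matrix.dotProduct_mulVec, dotProduct_comm]

namespace IsNash

variable {A B : Matrix n m ℝ} {x : n → ℝ} {y : m → ℝ}

theorem transpose (h : IsNash A B x y) : IsNash B.transpose A.transpose y x := by
  obtain ⟨hx, hy, hrow, hcol⟩ := h
  exact ⟨hy, hx, by simpa only [payoff_transpose] using hcol,
    by simpa only [payoff_transpose] using hrow⟩

theorem mulVec_le_payoff (h : IsNash A B x y) (i : n) : A.mulVec y i ≤ payoff A x y := by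
  classical
  calc A.mulVec y i = payoff A (Pi.single i 1) y := by
        rw [payoff_eq_mulVec_dotProduct, dotProduct_single_one]
    _ ≤ payoff A x y := h.2.2.1 _ (isMixed_single i)

theorem row_eq_zero_of_forall_lt (h : IsNash A B x y) {r s : n}
    (hrs : ∀ j, y j ≠ 0 → A r j < A s j) : x r = 0 := by
  by_contra hr
  have hmulVec_lt : A.mulVec y r < A.mulVec y s := by
    obtain ⟨j, hj⟩ := h.2.1.exists_ne_zero
    exact dotProduct_lt_dotProduct_of_le_of_lt_on_support h.2.1.1
      (fun j hj => (hrs j hj).le) ⟨j, hj, hrs j hj⟩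
  refine lt_irrefl (payoff A x y) ?_
  calc payoff A x y = A.mulVec y ⬝ᵥ x := payoff_eq_mulVec_dotProduct A x y
    _ < (fun _ => payoff A x y) ⬝ᵥ x :=
        dotProduct_lt_dotProduct_of_le_of_lt_on_support h.1.1
          (fun i _ => h.mulVec_le_payoff i) ⟨r, hr, hmulVec_lt.trans_le (h.mulVec_le_payoff s)⟩
    _ = payoff A x y := by rw [dotProduct, ← mul_sum, h.1.2, mul_one]

theorem col_eq_zero_of_forall_lt (h : IsNash A B x y) {r s : m}
    (hrs : ∀ i, x i ≠ 0 → B i r < B i s) : y r = 0 :=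
  h.transpose.row_eq_zero_of_forall_lt hrs

end IsNash

end Dominance

section SumGame

namespace IsMixed

variable {α β : Type*} [Fintype α] [Fintype β] {z : α ⊕ β → ℝ}

theorem comp_inr_ne_zero (hz : IsMixed z) (hl : z ∘ Sum.inl = 0) : z ∘ Sum.inr ≠ 0 := by
  intro hr
  obtain ⟨a | b, hne⟩ := hz.exists_ne_zero
  exacts [hne (congrFun hl a), hne (congrFun hr b)]

theorem sum_inl_pos_and_lt_one (hz : IsMixed z) (hl : z ∘ Sum.inl ≠ 0) (hr : z ∘ Sum.inr ≠ 0) :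
    0 < ∑ a, z (Sum.inl a) ∧ ∑ a, z (Sum.inl a) < 1 := by
  have hpos_inl : 0 < ∑ a, z (Sum.inl a) :=
    Fintype.sum_pos (lt_of_le_of_ne (fun a => hz.1 (Sum.inl a)) hl.symm)
  have hpos_inr : 0 < ∑ b, z (Sum.inr b) :=
    Fintype.sum_pos (lt_of_le_of_ne (fun b => hz.1 (Sum.inr b)) hr.symm)
  have htotal : ∑ a, z (Sum.inl a) + ∑ b, z (Sum.inr b) = 1 := by
    rw [← Fintype.sum_sum_type, hz.2]
  exact ⟨hpos_inl, by linarith⟩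

end IsMixed

variable {n₁ m₁ n₂ m₂ : Type*} [Fintype n₁] [Fintype m₁] [Fintype n₂] [Fintype m₂]
  {x : n₁ ⊕ n₂ → ℝ} {y : m₁ ⊕ m₂ → ℝ}

namespace IsNash

section Row

variable {A₁ : Matrix n₁ m₁ ℝ} {A₂ : Matrix n₂ m₂ ℝ} {B : Matrix (n₁ ⊕ n₂) (m₁ ⊕ m₂) ℝ} {K : ℝ}

theorem row_inl_eq_zero_of_col_inr_eq_zero [Nonempty n₂] (h : IsNash (sumGame A₁ A₂ K) B x y)
    (hA₁ : ∀ i j, A₁ i j < K) (hy : y ∘ Sum.inr = 0) : x ∘ Sum.inl = 0 := by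
  funext i
  refine h.row_eq_zero_of_forall_lt (s := Sum.inr (Classical.arbitrary n₂)) ?_
  rintro (j | j) hj
  exacts [hA₁ i j, absurd (congrFun hy j) hj]

theorem row_inr_eq_zero_of_col_inl_eq_zero [Nonempty n₁] (h : IsNash (sumGame A₁ A₂ K) B x y)
    (hA₂ : ∀ i j, A₂ i j < K) (hy : y ∘ Sum.inl = 0) : x ∘ Sum.inr = 0 := by
  funext i
  refine h.row_eq_zero_of_forall_lt (s := Sum.inl (Classical.arbitrary n₁)) ?_
  rintro (j | j) hj
  exacts [absurd (congrFun hy j) hj, hA₂ i j]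

end Row

section Column

variable {A : Matrix (n₁ ⊕ n₂) (m₁ ⊕ m₂) ℝ} {B₁ : Matrix n₁ m₁ ℝ} {B₂ : Matrix n₂ m₂ ℝ} {L : ℝ}

theorem col_inl_eq_zero_of_row_inl_eq_zero [Nonempty m₂] (h : IsNash A (sumGame B₁ B₂ L) x y)
    (hB₂ : ∀ i j, L < B₂ i j) (hx : x ∘ Sum.inl = 0) : y ∘ Sum.inl = 0 := by
  funext j
  refine h.col_eq_zero_of_forall_lt (s := Sum.inr (Classical.arbitrary m₂)) ?_
  rintro (i | i) hi
  exacts [absurd (congrFun hx i) hi, hB₂ i _]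

theorem col_inr_eq_zero_of_row_inr_eq_zero [Nonempty m₁] (h : IsNash A (sumGame B₁ B₂ L) x y)
    (hB₁ : ∀ i j, L < B₁ i j) (hx : x ∘ Sum.inr = 0) : y ∘ Sum.inr = 0 := by
  funext j
  refine h.col_eq_zero_of_forall_lt (s := Sum.inl (Classical.arbitrary m₁)) ?_
  rintro (i | i) hi
  exacts [hB₁ i _, absurd (congrFun hx i) hi]

end Column

end IsNash

theorem sum_game_interior_mass_general [Nonempty n₁] [Nonempty m₁] [Nonempty n₂] [Nonempty m₂]
    {A₁ B₁ : Matrix n₁ m₁ ℝ} {A₂ B₂ : Matrix n₂ m₂ ℝ} {K L : ℝ}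
    (hA₁ : ∀ i j, A₁ i j < K) (hB₁ : ∀ i j, L < B₁ i j)
    (hA₂ : ∀ i j, A₂ i j < K) (hB₂ : ∀ i j, L < B₂ i j)
    (h : IsNash (sumGame A₁ A₂ K) (sumGame B₁ B₂ L) x y) :
    (0 < ∑ i, x (Sum.inl i) ∧ ∑ i, x (Sum.inl i) < 1) ∧
    (0 < ∑ j, y (Sum.inl j) ∧ ∑ j, y (Sum.inl j) < 1) := by
  have hyr : x ∘ Sum.inr = 0 → y ∘ Sum.inr = 0 := h.col_inr_eq_zero_of_row_inr_eq_zero hB₁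
  have hxl : y ∘ Sum.inr = 0 → x ∘ Sum.inl = 0 := h.row_inl_eq_zero_of_col_inr_eq_zero hA₁
  have hyl : x ∘ Sum.inl = 0 → y ∘ Sum.inl = 0 := h.col_inl_eq_zero_of_row_inl_eq_zero hB₂
  have hxr : y ∘ Sum.inl = 0 → x ∘ Sum.inr = 0 := h.row_inr_eq_zero_of_col_inl_eq_zero hA₂
  have hxl_ne : x ∘ Sum.inl ≠ 0 := fun hl => h.1.comp_inr_ne_zero hl (hxr (hyl hl))
  have hxr_ne : x ∘ Sum.inr ≠ 0 := fun hr => hxl_ne (hxl (hyr hr))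
  exact ⟨h.1.sum_inl_pos_and_lt_one hxl_ne hxr_ne,
    h.2.1.sum_inl_pos_and_lt_one (mt hxr hxr_ne) (mt hxl hxl_ne)⟩

end SumGame

theorem sum_game_interior_mass {n₁ m₁ n₂ m₂ : ℕ}
    (hn₁ : 1 ≤ n₁) (hm₁ : 1 ≤ m₁) (hn₂ : 1 ≤ n₂) (hm₂ : 1 ≤ m₂)
    (A₁ B₁ : Matrix (Fin n₁) (Fin m₁) ℝ) (A₂ B₂ : Matrix (Fin n₂) (Fin m₂) ℝ) (K : ℝ)
    (hA₁ : ∀ i j, |A₁ i j| < K) (hB₁ : ∀ i j, |B₁ i j| < K)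
    (hA₂ : ∀ i j, |A₂ i j| < K) (hB₂ : ∀ i j, |B₂ i j| < K)
    (x : Fin n₁ ⊕ Fin n₂ → ℝ) (y : Fin m₁ ⊕ Fin m₂ → ℝ)
    (h : IsNash (sumGame A₁ A₂ K) (sumGame B₁ B₂ (-K)) x y) :
    (0 < ∑ i : Fin n₁, x (Sum.inl i) ∧ ∑ i : Fin n₁, x (Sum.inl i) < 1) ∧
    (0 < ∑ j : Fin m₁, y (Sum.inl j) ∧ ∑ j : Fin m₁, y (Sum.inl j) < 1) := by
  rw [Nat.succ_le_iff, Fin.pos_iff_nonempty] at hn₁ hm₁ hn₂ hm₂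
  exact sum_game_interior_mass_general (fun i j => lt_of_abs_lt (hA₁ i j))
    (fun i j => neg_lt_of_abs_lt (hB₁ i j)) (fun i j => lt_of_abs_lt (hA₂ i j))
    (fun i j => neg_lt_of_abs_lt (hB₂ i j)) h
end

section
/- Let (A¹, B¹) be an n₁×m₁ bimatrix game, (A², B²) an n₂×m₂ bimatrix game with n₁, m₁, n₂, m₂ ≥ 1, K a real constant with K > |A¹ i j|, |B¹ i j|, |A² i j|, |B² i j| for all entries, and let (A, B) be their sum game via K. Then (A, B) has no strictly dominated rows and no strictly dominated columns: there are no rows r ≠ r' with A r' c > A r c for every column c, and no columns c ≠ c' with B r c' > B r c for every row r. -/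
open Finset

/-- Row `r` is strictly dominated by row `r'` in the game `(A, _)`. -/
def RowDominated {n m : Type*} (A : Matrix n m ℝ) (r r' : n) : Prop :=
  ∀ c, A r c < A r' c

/-- Column `c` is strictly dominated by column `c'` in the game `(_, B)`. -/
def ColDominated {n m : Type*} (B : Matrix n m ℝ) (c c' : m) : Prop :=
  ∀ r, B r c < B r c'

/-!
The constant `K` occurs in every row of `A` and is an upper bound for all entries of `A`, so no row
can be beaten in a column where it already takes the value `K`. Dually, `-K` occurs in every column
of `B` and is a lower bound for all entries of `B`.
-/

section SumGame

variable {n₁ m₁ n₂ m₂ : Type*} (M₁ : Matrix n₁ m₁ ℝ) (M₂ : Matrix n₂ m₂ ℝ) (c : ℝ)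

theorem exists_sumGame_row_eq [Nonempty m₁] [Nonempty m₂] : ∀ i, ∃ j, sumGame M₁ M₂ c i j = c
  | .inl _ => ⟨.inr (Classical.arbitrary m₂), rfl⟩
  | .inr _ => ⟨.inl (Classical.arbitrary m₁), rfl⟩

theorem exists_sumGame_col_eq [Nonempty n₁] [Nonempty n₂] : ∀ j, ∃ i, sumGame M₁ M₂ c i j = c
  | .inl _ => ⟨.inr (Classical.arbitrary n₂), rfl⟩
  | .inr _ => ⟨.inl (Classical.arbitrary n₁), rfl⟩

variable {M₁ M₂ c}

theorem forall_sumGame {p : ℝ → Prop} (h₁ : ∀ i j, p (M₁ i j)) (h₂ : ∀ i j, p (M₂ i j))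
    (hc : p c) : ∀ i j, p (sumGame M₁ M₂ c i j)
  | .inl i, .inl j => h₁ i j
  | .inl _, .inr _ => hc
  | .inr _, .inl _ => hc
  | .inr i, .inr j => h₂ i j

theorem not_rowDominated_sumGame [Nonempty m₁] [Nonempty m₂] (h₁ : ∀ i j, M₁ i j ≤ c)
    (h₂ : ∀ i j, M₂ i j ≤ c) (r r' : n₁ ⊕ n₂) : ¬ RowDominated (sumGame M₁ M₂ c) r r' := by
  intro h_dom
  obtain ⟨j, hj⟩ := exists_sumGame_row_eq M₁ M₂ c r
  have h_le : sumGame M₁ M₂ c r' j ≤ c := forall_sumGame (p := (· ≤ c)) h₁ h₂ le_rfl r' j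
  have h_lt : c < sumGame M₁ M₂ c r' j := hj.symm.trans_lt (h_dom j)
  exact h_lt.not_ge h_le

theorem not_colDominated_sumGame [Nonempty n₁] [Nonempty n₂] (h₁ : ∀ i j, c ≤ M₁ i j)
    (h₂ : ∀ i j, c ≤ M₂ i j) (k k' : m₁ ⊕ m₂) : ¬ ColDominated (sumGame M₁ M₂ c) k k' := by
  intro h_dom
  obtain ⟨i, hi⟩ := exists_sumGame_col_eq M₁ M₂ c k'
  have h_le : c ≤ sumGame M₁ M₂ c i k := forall_sumGame (p := (c ≤ ·)) h₁ h₂ le_rfl i k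
  have h_lt : sumGame M₁ M₂ c i k < c := (h_dom i).trans_eq hi
  exact h_lt.not_ge h_le

end SumGame

theorem sum_game_no_strictly_dominated_general {n₁ m₁ n₂ m₂ : Type*}
    [Nonempty n₁] [Nonempty m₁] [Nonempty n₂] [Nonempty m₂]
    {A₁ B₁ : Matrix n₁ m₁ ℝ} {A₂ B₂ : Matrix n₂ m₂ ℝ} {K L : ℝ}
    (hA₁ : ∀ i j, A₁ i j ≤ K) (hB₁ : ∀ i j, L ≤ B₁ i j)
    (hA₂ : ∀ i j, A₂ i j ≤ K) (hB₂ : ∀ i j, L ≤ B₂ i j) :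
    (∀ r r', ¬ RowDominated (sumGame A₁ A₂ K) r r') ∧
    (∀ c c', ¬ ColDominated (sumGame B₁ B₂ L) c c') :=
  ⟨not_rowDominated_sumGame hA₁ hA₂, not_colDominated_sumGame hB₁ hB₂⟩

theorem sum_game_no_strictly_dominated {n₁ m₁ n₂ m₂ : ℕ}
    (hn₁ : 1 ≤ n₁) (hm₁ : 1 ≤ m₁) (hn₂ : 1 ≤ n₂) (hm₂ : 1 ≤ m₂)
    (A₁ B₁ : Matrix (Fin n₁) (Fin m₁) ℝ) (A₂ B₂ : Matrix (Fin n₂) (Fin m₂) ℝ) (K : ℝ)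
    (hA₁ : ∀ i j, |A₁ i j| < K) (hB₁ : ∀ i j, |B₁ i j| < K)
    (hA₂ : ∀ i j, |A₂ i j| < K) (hB₂ : ∀ i j, |B₂ i j| < K) :
    (¬ ∃ r r' : Fin n₁ ⊕ Fin n₂, r ≠ r' ∧ RowDominated (sumGame A₁ A₂ K) r r') ∧
    (¬ ∃ c c' : Fin m₁ ⊕ Fin m₂, c ≠ c' ∧ ColDominated (sumGame B₁ B₂ (-K)) c c') := by
  have := Fin.pos_iff_nonempty.mp hn₁
  have := Fin.pos_iff_nonempty.mp hm₁
  have := Fin.pos_iff_nonempty.mp hn₂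
  have := Fin.pos_iff_nonempty.mp hm₂
  obtain ⟨h_row, h_col⟩ := sum_game_no_strictly_dominated_general
    (fun i j => (lt_of_abs_lt (hA₁ i j)).le) (fun i j => (neg_lt_of_abs_lt (hB₁ i j)).le)
    (fun i j => (lt_of_abs_lt (hA₂ i j)).le) (fun i j => (neg_lt_of_abs_lt (hB₂ i j)).le)
  exact ⟨fun ⟨r, r', _, h⟩ => h_row r r' h, fun ⟨c, c', _, h⟩ => h_col c c' h⟩
end

section
/- Let (A¹, B¹) be an n₁×m₁ bimatrix game, (A², B²) an n₂×m₂ bimatrix game, and let (A, B) be their product game. If row (i₁, i₂) is strictly dominated by row (i₁', i₂') in (A, B), then row i₁ is strictly dominated by row i₁' in (A¹, B¹), or row i₂ is strictly dominated by row i₂' in (A², B²). The analogous statement holds for columns: if column (j₁, j₂) is strictly dominated by column (j₁', j₂') in (A, B), then column j₁ is strictly dominated by j₁' in (A¹, B¹) or column j₂ is strictly dominated by j₂' in (A², B²). -/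
open Finset

theorem forall_lt_or_forall_lt_of_forall_add_lt_add {α β M : Type*} [LinearOrder M] [Add M]
    [AddLeftMono M] [AddRightMono M] {f f' : α → M} {g g' : β → M}
    (h : ∀ a b, f a + g b < f' a + g' b) : (∀ a, f a < f' a) ∨ ∀ b, g b < g' b := by
  have pointwise : ∀ a b, f a < f' a ∨ g b < g' b := fun a b ↦ lt_or_lt_of_add_lt_add (h a b)
  simpa only [forall_or_left, forall_or_right] using pointwise

section ProductGame

variable {n₁ m₁ n₂ m₂ : Type*}

theorem RowDominated.or_of_prodGame {A₁ : Matrix n₁ m₁ ℝ} {A₂ : Matrix n₂ m₂ ℝ}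
    {i₁ i₁' : n₁} {i₂ i₂' : n₂} (h : RowDominated (prodGame A₁ A₂) (i₁, i₂) (i₁', i₂')) :
    RowDominated A₁ i₁ i₁' ∨ RowDominated A₂ i₂ i₂' :=
  forall_lt_or_forall_lt_of_forall_add_lt_add fun j₁ j₂ ↦ h (j₁, j₂)

theorem ColDominated.or_of_prodGame {B₁ : Matrix n₁ m₁ ℝ} {B₂ : Matrix n₂ m₂ ℝ}
    {j₁ j₁' : m₁} {j₂ j₂' : m₂} (h : ColDominated (prodGame B₁ B₂) (j₁, j₂) (j₁', j₂')) :
    ColDominated B₁ j₁ j₁' ∨ ColDominated B₂ j₂ j₂' :=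
  forall_lt_or_forall_lt_of_forall_add_lt_add fun i₁ i₂ ↦ h (i₁, i₂)

theorem dominated_in_product_dominated_in_factor_general
    (A₁ B₁ : Matrix n₁ m₁ ℝ) (A₂ B₂ : Matrix n₂ m₂ ℝ) :
    (∀ (i₁ i₁' : n₁) (i₂ i₂' : n₂),
      RowDominated (prodGame A₁ A₂) (i₁, i₂) (i₁', i₂') →
        RowDominated A₁ i₁ i₁' ∨ RowDominated A₂ i₂ i₂') ∧
    (∀ (j₁ j₁' : m₁) (j₂ j₂' : m₂),
      ColDominated (prodGame B₁ B₂) (j₁, j₂) (j₁', j₂') →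
        ColDominated B₁ j₁ j₁' ∨ ColDominated B₂ j₂ j₂') :=
  ⟨fun _ _ _ _ ↦ RowDominated.or_of_prodGame, fun _ _ _ _ ↦ ColDominated.or_of_prodGame⟩

end ProductGame

theorem dominated_in_product_dominated_in_factor {n₁ m₁ n₂ m₂ : ℕ}
    (A₁ B₁ : Matrix (Fin n₁) (Fin m₁) ℝ) (A₂ B₂ : Matrix (Fin n₂) (Fin m₂) ℝ) :
    (∀ (i₁ i₁' : Fin n₁) (i₂ i₂' : Fin n₂),
      RowDominated (prodGame A₁ A₂) (i₁, i₂) (i₁', i₂') →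
        RowDominated A₁ i₁ i₁' ∨ RowDominated A₂ i₂ i₂') ∧
    (∀ (j₁ j₁' : Fin m₁) (j₂ j₂' : Fin m₂),
      ColDominated (prodGame B₁ B₂) (j₁, j₂) (j₁', j₂') →
        ColDominated B₁ j₁ j₁' ∨ ColDominated B₂ j₂ j₂') :=
  dominated_in_product_dominated_in_factor_general A₁ B₁ A₂ B₂
end
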